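/- Let a : ℝ → ℂ be a smooth 2π-periodic function and k ≥ 1 an integer. Then the family (j₁, …, j_{2k}) ↦ Z_{j₁…j_{2k}} · â_{j₁} â_{j₂} ⋯ â_{j_{2k}}, indexed by all 2k-tuples of integers, is absolutely summable: Σ_{j₁,…,j_{2k} ∈ ℤ} |Z_{j₁…j_{2k}} â_{j₁} ⋯ â_{j_{2k}}| < ∞. In particular the zeta-invariant Z_k(a) is well defined. -/

import Mathlib

open scoped BigOperators

/-- `f(n) = n (n+j₁)(n+j₁+j₂)⋯(n+j₁+⋯+j_{2k-1})`. -/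
noncomputable def prodPoly (k : ℕ) (j : Fin (2 * k) → ℤ) (n : ℤ) : ℤ :=
  ∏ m : Fin (2 * k), (n + ∑ i ∈ Finset.Iio m, j i)

/-- `N_{j₁…j_{2k}} = Σ_{n ∈ ℤ} (|f(n)| − f(n))` (a finite sum). -/
noncomputable def Ncoef (k : ℕ) (j : Fin (2 * k) → ℤ) : ℤ :=
  ∑ᶠ n : ℤ, (|prodPoly k j n| - prodPoly k j n)

/-- The symmetrized coefficients `Z_{j₁…j_{2k}}`. -/
noncomputable def Zcoef (k : ℕ) (j : Fin (2 * k) → ℤ) : ℚ :=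
  if ∑ i, j i = 0 then
    (1 / (Nat.factorial (2 * k) : ℚ)) *
      ∑ π : Equiv.Perm (Fin (2 * k)), (Ncoef k (j ∘ π) : ℚ)
  else 0

/-- Fourier coefficients `â_n = (1/(2π)) ∫₀^{2π} e^{-inθ} a(θ) dθ`. -/
noncomputable def fourierCoef (a : ℝ → ℂ) (n : ℤ) : ℂ :=
  (1 / (2 * Real.pi)) *
    ∫ θ in (0 : ℝ)..(2 * Real.pi), Complex.exp (-Complex.I * n * θ) * a θ

open Finset in
lemma aux_summable_prod {m : ℕ} (g : ℤ → ℝ) (hg : ∀ n, 0 ≤ g n) (hs : Summable g) :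
    Summable (fun j : Fin m → ℤ => ∏ i, g (j i)) := by
  classical
  refine summable_of_sum_le (c := ∏ _i : Fin m, ∑' n, g n)
    (fun j => Finset.prod_nonneg fun i _ => hg _) ?_
  intro s
  let t : Finset ℤ := s.biUnion (fun j => Finset.univ.image j)
  have hst : s ⊆ Fintype.piFinset (fun _ : Fin m => t) := by
    intro j hj
    rw [Fintype.mem_piFinset]
    intro i
    exact Finset.mem_biUnion.2 ⟨j, hj, Finset.mem_image_of_mem _ (Finset.mem_univ _)⟩
  calc ∑ j ∈ s, ∏ i, g (j i)
      ≤ ∑ j ∈ Fintype.piFinset (fun _ : Fin m => t), ∏ i, g (j i) :=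
        Finset.sum_le_sum_of_subset_of_nonneg hst
          (fun j _ _ => Finset.prod_nonneg fun i _ => hg _)
    _ = ∏ _i : Fin m, ∑ n ∈ t, g n := by rw [Finset.prod_univ_sum]
    _ ≤ _ := Finset.prod_le_prod (fun i _ => Finset.sum_nonneg fun n _ => hg n)
        (fun i _ => hs.sum_le_tsum t (fun n _ => hg n))

lemma aux_one_add_sum_le (m : ℕ) (j : Fin m → ℤ) (s : Finset (Fin m)) :
    1 + ∑ i ∈ s, |j i| ≤ ∏ i ∈ s, (1 + |j i|) := by
  classical
  induction s using Finset.induction_on with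
  | empty => simp
  | insert a s ha ih =>
    rw [Finset.sum_insert ha, Finset.prod_insert ha]
    have h1 : 0 ≤ ∑ i ∈ s, |j i| := Finset.sum_nonneg fun i _ => abs_nonneg _
    nlinarith [abs_nonneg (j a), mul_nonneg (abs_nonneg (j a)) h1]

lemma aux_N (k : ℕ) (j : Fin (2 * k) → ℤ) :
    |Ncoef k j| ≤ 6 * 2 ^ (2 * k) * (∏ i, (1 + |j i|)) ^ (2 * k + 1) := by
  set P : ℤ := ∏ i, (1 + |j i|) with hP
  have hPs : 1 + ∑ i, |j i| ≤ P := aux_one_add_sum_le _ j Finset.univ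
  have hs0 : 0 ≤ ∑ i, |j i| := Finset.sum_nonneg fun i _ => abs_nonneg _
  have hpart : ∀ m : Fin (2 * k), |∑ i ∈ Finset.Iio m, j i| ≤ P - 1 := by
    intro m
    calc |∑ i ∈ Finset.Iio m, j i| ≤ ∑ i ∈ Finset.Iio m, |j i| := Finset.abs_sum_le_sum_abs _ _
      _ ≤ ∑ i, |j i| := Finset.sum_le_sum_of_subset_of_nonneg (Finset.subset_univ _)
          (fun _ _ _ => abs_nonneg _)
      _ ≤ P - 1 := by linarith
  have hsupp : Function.support (fun n : ℤ => |prodPoly k j n| - prodPoly k j n)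
      ⊆ (Finset.Icc (-P) P : Finset ℤ) := by
    intro n hn
    by_contra hout
    apply hn
    have : 0 ≤ prodPoly k j n := by
      simp only [Finset.coe_Icc, Set.mem_Icc, not_and_or, not_le] at hout
      unfold prodPoly
      rcases hout with h | h
      · have e : ∏ m : Fin (2 * k), (n + ∑ i ∈ Finset.Iio m, j i)
            = ∏ m : Fin (2 * k), (-(n + ∑ i ∈ Finset.Iio m, j i)) := by
          rw [Finset.prod_neg]
          simp
        rw [e]
        refine Finset.prod_nonneg fun m _ => ?_
        have := (abs_le.1 (hpart m)).2
        linarith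
      · refine Finset.prod_nonneg fun m _ => ?_
        have := (abs_le.1 (hpart m)).1
        linarith
    simp [abs_of_nonneg this]
  have hb : ∀ n ∈ Finset.Icc (-P) P, |(|prodPoly k j n| - prodPoly k j n)| ≤ 2 * (2 * P) ^ (2 * k) := by
    intro n hn
    have hn' := Finset.mem_Icc.1 hn
    have h1 : |prodPoly k j n| ≤ (2 * P) ^ (2 * k) := by
      unfold prodPoly
      rw [Finset.abs_prod]
      calc _ ≤ ∏ _m : Fin (2 * k), (2 * P) := by
            refine Finset.prod_le_prod (fun _ _ => abs_nonneg _) fun m _ => ?_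
            have := abs_le.1 (hpart m)
            rw [abs_le]; constructor <;> linarith
        _ = _ := by simp
    have h2 := abs_le.1 h1
    rw [abs_le]
    have := abs_nonneg (prodPoly k j n)
    constructor <;> linarith
  unfold Ncoef
  rw [finsum_eq_sum_of_support_subset _ hsupp]
  have hcard : ((Finset.Icc (-P) P).card : ℤ) = 2 * P + 1 := by
    rw [Int.card_Icc]; rw [Int.toNat_of_nonneg] <;> linarith
  calc _ ≤ ∑ n ∈ Finset.Icc (-P) P, |(|prodPoly k j n| - prodPoly k j n)| :=
        Finset.abs_sum_le_sum_abs _ _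
    _ ≤ ∑ _n ∈ Finset.Icc (-P) P, 2 * (2 * P) ^ (2 * k) := Finset.sum_le_sum hb
    _ = (2 * P + 1) * (2 * (2 * P) ^ (2 * k)) := by
        rw [Finset.sum_const, nsmul_eq_mul, hcard]
    _ ≤ (3 * P) * (2 * (2 * P) ^ (2 * k)) := by
        have : 0 ≤ P := by linarith
        apply mul_le_mul_of_nonneg_right
        · linarith
        · positivity
    _ = _ := by rw [mul_pow, pow_succ]; ring

lemma aux_Z (k : ℕ) (j : Fin (2 * k) → ℤ) :
    |Zcoef k j| ≤ 6 * 2 ^ (2 * k) * (∏ i, (1 + |(j i : ℚ)|)) ^ (2 * k + 1) := by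
  have hnn : (0 : ℚ) ≤ 6 * 2 ^ (2 * k) * (∏ i, (1 + |(j i : ℚ)|)) ^ (2 * k + 1) := by
    have : (0 : ℚ) ≤ ∏ i, (1 + |(j i : ℚ)|) := Finset.prod_nonneg fun i _ => by positivity
    positivity
  unfold Zcoef
  split_ifs
  · have hf : (0 : ℚ) < (Nat.factorial (2 * k) : ℚ) := by positivity
    rw [abs_mul, abs_of_pos (by positivity), one_div, inv_mul_le_iff₀ hf]
    have hb : ∀ π : Equiv.Perm (Fin (2 * k)), |(Ncoef k (j ∘ π) : ℚ)| ≤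
        6 * 2 ^ (2 * k) * (∏ i, (1 + |(j i : ℚ)|)) ^ (2 * k + 1) := by
      intro π
      have h := aux_N k (j ∘ π)
      have e : ∏ i, (1 + |(j ∘ π) i|) = ∏ i, (1 + |j i|) :=
        Equiv.prod_comp π (fun i => 1 + |j i|)
      rw [e] at h
      exact_mod_cast h
    calc _ ≤ ∑ π : Equiv.Perm (Fin (2 * k)), |(Ncoef k (j ∘ π) : ℚ)| :=
          Finset.abs_sum_le_sum_abs _ _
      _ ≤ ∑ _π : Equiv.Perm (Fin (2 * k)), _ := Finset.sum_le_sum fun π _ => hb π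
      _ = _ := by
        rw [Finset.sum_const, nsmul_eq_mul, Finset.card_univ, Fintype.card_perm, Fintype.card_fin]
  · simpa using hnn

lemma aux_fc_deriv (a : ℝ → ℂ) (ha : ContDiff ℝ (⊤ : ℕ∞) a)
    (hper : Function.Periodic a (2 * Real.pi)) (n : ℤ) :
    fourierCoef (deriv a) n = (Complex.I * n) * fourierCoef a n := by
  unfold fourierCoef
  have hd : ∀ x ∈ Set.uIcc (0 : ℝ) (2 * Real.pi), HasDerivAt a (deriv a x) x := fun x _ =>
    (ha.differentiable (by simp) x).hasDerivAt
  have hu : ∀ x ∈ Set.uIcc (0 : ℝ) (2 * Real.pi),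
      HasDerivAt (fun θ : ℝ => Complex.exp (-Complex.I * n * θ))
        (Complex.exp (-Complex.I * n * x) * (-Complex.I * n)) x := by
    intro x _
    have h1 : HasDerivAt (fun θ : ℝ => -Complex.I * n * (θ : ℂ)) (-Complex.I * n) x := by
      simpa using (Complex.ofRealCLM.hasDerivAt (x := x)).const_mul (-Complex.I * (n : ℂ))
    exact h1.cexp
  have hdc : Continuous (deriv a) := ha.continuous_deriv (by simp)
  have key := intervalIntegral.integral_mul_deriv_eq_deriv_mul hu hd
    (by apply Continuous.intervalIntegrable; fun_prop) (hdc.intervalIntegrable _ _)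
  have hp : a (2 * Real.pi) = a 0 := by simpa using hper 0
  have he : Complex.exp (-Complex.I * n * ((2 * Real.pi : ℝ) : ℂ)) = 1 := by
    rw [Complex.exp_eq_one_iff]
    exact ⟨-n, by push_cast; ring⟩
  rw [key, he, hp]
  have e2 : (fun x : ℝ => Complex.exp (-Complex.I * n * x) * (-Complex.I * n) * a x)
      = fun x : ℝ => (-Complex.I * n) * (Complex.exp (-Complex.I * n * x) * a x) := by
    funext x; ring
  rw [e2, intervalIntegral.integral_const_mul]
  simp
  ring

lemma aux_fc_bdd (a : ℝ → ℂ) (ha : Continuous a) : ∃ C, 0 ≤ C ∧ ∀ n, ‖fourierCoef a n‖ ≤ C := by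
  refine ⟨‖(1 / (2 * Real.pi) : ℂ)‖ * |∫ θ in (0 : ℝ)..(2 * Real.pi), ‖a θ‖|, by positivity, ?_⟩
  intro n
  unfold fourierCoef
  rw [norm_mul]
  gcongr
  refine (intervalIntegral.norm_integral_le_abs_integral_norm).trans (le_of_eq ?_)
  congr 2
  funext θ
  rw [norm_mul, Complex.norm_exp]
  simp

lemma aux_decay (p : ℕ) : ∀ (a : ℝ → ℂ), ContDiff ℝ (⊤ : ℕ∞) a →
    Function.Periodic a (2 * Real.pi) →
    ∃ C, 0 ≤ C ∧ ∀ n : ℤ, |(n : ℝ)| ^ p * ‖fourierCoef a n‖ ≤ C := by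
  induction p with
  | zero => intro a ha _; simpa using aux_fc_bdd a ha.continuous
  | succ p ih =>
    intro a ha hper
    have hd : ContDiff ℝ (⊤ : ℕ∞) (deriv a) := ((contDiff_infty_iff_deriv).1 ha).2
    have hp : Function.Periodic (deriv a) (2 * Real.pi) := by
      intro x
      rw [← deriv_comp_add_const]
      congr 1
      funext y
      exact hper y
    obtain ⟨C, hC, h⟩ := ih _ hd hp
    refine ⟨C, hC, fun n => ?_⟩
    have := h n
    rw [aux_fc_deriv a ha hper, norm_mul, norm_mul, Complex.norm_I, Complex.norm_intCast] at this
    rw [pow_succ]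
    linarith

lemma aux_summable (q : ℕ) (a : ℝ → ℂ) (ha : ContDiff ℝ (⊤ : ℕ∞) a)
    (hper : Function.Periodic a (2 * Real.pi)) :
    Summable (fun n : ℤ => (1 + |(n : ℝ)|) ^ q * ‖fourierCoef a n‖) := by
  obtain ⟨C, hC, h⟩ := aux_decay (q + 2) a ha hper
  have hs : Summable (fun n : ℤ => 2 ^ q * C * (1 / (n : ℝ) ^ 2)) :=
    (Real.summable_one_div_int_pow.2 (by norm_num)).mul_left _
  refine Summable.of_norm_bounded_eventually hs ?_
  refine (Set.finite_singleton (0 : ℤ)).subset ?_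
  intro n hn
  by_contra hne
  apply hn
  have hne' : n ≠ 0 := hne
  have h1 : (1 : ℝ) ≤ |(n : ℝ)| := by exact_mod_cast Int.one_le_abs hne'
  have hpos : (0 : ℝ) < (n : ℝ) ^ 2 := by positivity
  change ‖(1 + |(n : ℝ)|) ^ q * ‖fourierCoef a n‖‖ ≤ 2 ^ q * C * (1 / (n : ℝ) ^ 2)
  rw [Real.norm_of_nonneg (by positivity), mul_one_div, le_div_iff₀ hpos]
  have h2 : (1 + |(n : ℝ)|) ^ q ≤ (2 * |(n : ℝ)|) ^ q := by gcongr; linarith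
  calc (1 + |(n : ℝ)|) ^ q * ‖fourierCoef a n‖ * (n : ℝ) ^ 2
      ≤ (2 * |(n : ℝ)|) ^ q * ‖fourierCoef a n‖ * (n : ℝ) ^ 2 := by gcongr
    _ = 2 ^ q * (|(n : ℝ)| ^ (q + 2) * ‖fourierCoef a n‖) := by
        rw [← sq_abs (n : ℝ), mul_pow]; ring
    _ ≤ 2 ^ q * C := by gcongr; exact h n

/-- For a smooth `2π`-periodic `a : ℝ → ℂ`, the family
`(j₁,…,j_{2k}) ↦ Z_{j₁…j_{2k}} â_{j₁} ⋯ â_{j_{2k}}` is absolutely summable;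
in particular the zeta-invariant `Z_k(a)` is well defined. -/
theorem zetaInvariant_abs_summable (k : ℕ) (hk : 1 ≤ k) (a : ℝ → ℂ)
    (ha : ContDiff ℝ (⊤ : ℕ∞) a) (hper : Function.Periodic a (2 * Real.pi)) :
    Summable (fun j : Fin (2 * k) → ℤ =>
      ‖(Zcoef k j : ℂ) * ∏ i, fourierCoef a (j i)‖) := by
  have hs := (aux_summable_prod (m := 2 * k) _ (fun n => by positivity)
    (aux_summable (2 * k + 1) a ha hper)).mul_left (6 * 2 ^ (2 * k) : ℝ)
  refine Summable.of_nonneg_of_le (fun _ => norm_nonneg _) (fun j => ?_) hs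
  rw [norm_mul, norm_prod, Finset.prod_mul_distrib, Finset.prod_pow, ← mul_assoc]
  refine mul_le_mul_of_nonneg_right ?_ (Finset.prod_nonneg fun i _ => norm_nonneg _)
  have h := aux_Z k j
  have h' : |((Zcoef k j : ℚ) : ℝ)| ≤
      6 * 2 ^ (2 * k) * (∏ i, (1 + |(j i : ℝ)|)) ^ (2 * k + 1) := by
    exact_mod_cast h
  have e : (Zcoef k j : ℂ) = (((Zcoef k j : ℚ) : ℝ) : ℂ) := by push_cast; rfl
  rw [e, Complex.norm_real]
  exact h'
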